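/- Let Ω ⊆ ℝ^D be an open set and let Φ : Ω → Φ(Ω) ⊆ ℝ^D be a C¹ diffeomorphism onto its open image (Φ and Φ⁻¹ continuously differentiable, DΦ(x) invertible for every x). Let u : Φ(Ω) → ℝ be continuously differentiable. Then the following are equivalent: (i) ∫_{Φ(Ω)} ∇u(y)·∇v(y) dy = 0 for every continuously differentiable v : ℝ^D → ℝ with compact support contained in Φ(Ω); (ii) ∫_Ω |det DΦ(x)| · ( (DΦ(x))⁻¹ (DΦ(x))⁻ᵀ ∇(u∘Φ)(x) ) · ∇w(x) dx = 0 for every continuously differentiable w : ℝ^D → ℝ with compact support contained in Ω. -/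

import Mathlib

/-!
Both weak formulations are the same statement after the substitution `y = Φ(x)`. By the chain
rule, `∇(v ∘ Φ) = (DΦ)ᵀ (∇v ∘ Φ)`, so the mapped integrand with `w = v ∘ Φ` is
`|det DΦ| (∇u · ∇v) ∘ Φ` (`mapped_integrand_eq`), and the change of variables formula identifies
the two integrals (`integral_image_eq_mapped`). Moreover, `v ↦ v ∘ Φ`, extended by zero, is a
bijection between the test functions on `Φ(Ω)` and those on `Ω`, with inverse `w ↦ w ∘ Ψ`
(`exists_pullback_test`, applied to `Φ` and to `Ψ`).
-/

open MeasureTheory Matrix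

/-- The Jacobian matrix of `Φ : ℝ^D → ℝ^D` at `x`, i.e. the Fréchet derivative `DΦ(x)`
viewed as a `D × D` matrix. -/
noncomputable def jacMatrix {D : ℕ} (Φ : (Fin D → ℝ) → (Fin D → ℝ)) (x : Fin D → ℝ) :
    Matrix (Fin D) (Fin D) ℝ :=
  Matrix.of fun i j => fderiv ℝ Φ x (Pi.single j 1) i

/-- The gradient of `u : ℝ^D → ℝ` at `x`, as a vector of partial derivatives. -/
noncomputable def gradVec {D : ℕ} (u : (Fin D → ℝ) → ℝ) (x : Fin D → ℝ) : Fin D → ℝ :=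
  fun i => fderiv ℝ u x (Pi.single i 1)

/-- Test functions on `V` pull back to `U` along a map `F` that is C¹ on the open set `U` and has
a left inverse `G` there, with `G` continuous on `V` and mapping `V` into `U`: the extension of `v ∘ F` by zero is C¹, because its support lies in the compact
set `G (tsupport v) ⊆ U`. -/
lemma exists_pullback_test {D : ℕ} {U V : Set (Fin D → ℝ)} (hU : IsOpen U)
    {F G : (Fin D → ℝ) → (Fin D → ℝ)} (hF : ContDiffOn ℝ 1 F U) (hG : ContinuousOn G V)
    (hGV : Set.MapsTo G V U) (hGF : ∀ x ∈ U, G (F x) = x)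
    {v : (Fin D → ℝ) → ℝ} (hv : ContDiff ℝ 1 v) (hvc : HasCompactSupport v)
    (hvs : tsupport v ⊆ V) :
    ∃ w : (Fin D → ℝ) → ℝ, ContDiff ℝ 1 w ∧ HasCompactSupport w ∧ tsupport w ⊆ U ∧
      ∀ x ∈ U, w x = v (F x) := by
  classical
  have hK : IsCompact (G '' tsupport v) := hvc.isCompact.image_of_continuousOn (hG.mono hvs)
  have hsub : Function.support (U.indicator (v ∘ F)) ⊆ G '' tsupport v := by
    intro x hx
    have hxU : x ∈ U := Set.mem_of_indicator_ne_zero hx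
    have hne : v (F x) ≠ 0 := by
      rwa [Function.mem_support, Set.indicator_of_mem hxU] at hx
    exact ⟨F x, subset_tsupport v hne, hGF x hxU⟩
  have hts : tsupport (U.indicator (v ∘ F)) ⊆ G '' tsupport v :=
    closure_minimal hsub hK.isClosed
  have htsU : tsupport (U.indicator (v ∘ F)) ⊆ U := by
    rintro x hx
    obtain ⟨y, hy, rfl⟩ := hts hx
    exact hGV (hvs hy)
  refine ⟨U.indicator (v ∘ F), contDiff_iff_contDiffAt.2 fun x => ?_, hK.of_isClosed_subset
    (isClosed_tsupport _) hts, htsU, fun x hx => Set.indicator_of_mem hx _⟩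
  by_cases hx : x ∉ tsupport (U.indicator (v ∘ F))
  · exact contDiffAt_const.congr_of_eventuallyEq (notMem_tsupport_iff_eventuallyEq.1 hx)
  have hxU := hU.mem_nhds (htsU (not_not.1 hx))
  have h : ContDiffAt ℝ 1 (v ∘ F) x := hv.contDiffAt.comp x (hF.contDiffAt hxU)
  refine h.congr_of_eventuallyEq ?_
  filter_upwards [hxU] with z hz using Set.indicator_of_mem hz _

lemma jacMatrix_eq_toMatrix {D : ℕ} (Φ : (Fin D → ℝ) → (Fin D → ℝ)) (x : Fin D → ℝ) :
    jacMatrix Φ x = LinearMap.toMatrix' (fderiv ℝ Φ x : (Fin D → ℝ) →ₗ[ℝ] (Fin D → ℝ)) := by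
  ext i j
  simp [jacMatrix, LinearMap.toMatrix'_apply]

lemma gradVec_dotProduct {D : ℕ} (u : (Fin D → ℝ) → ℝ) (x z : Fin D → ℝ) :
    gradVec u x ⬝ᵥ z = fderiv ℝ u x z := by
  conv_rhs => rw [pi_eq_sum_univ' z]
  simp [gradVec, dotProduct, mul_comm]

lemma gradVec_comp {D : ℕ} {Φ : (Fin D → ℝ) → (Fin D → ℝ)} {u : (Fin D → ℝ) → ℝ}
    {x : Fin D → ℝ} (hu : DifferentiableAt ℝ u (Φ x)) (hΦ : DifferentiableAt ℝ Φ x) :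
    gradVec (u ∘ Φ) x = (jacMatrix Φ x)ᵀ *ᵥ gradVec u (Φ x) := by
  ext i
  rw [Matrix.mulVec, dotProduct_comm, gradVec_dotProduct, gradVec, fderiv_comp x hu hΦ]
  rfl

lemma mapped_integrand_eq {D : ℕ} {A : Matrix (Fin D) (Fin D) ℝ} (hA : IsUnit A)
    (a b : Fin D → ℝ) :
    ((A⁻¹ * (A⁻¹)ᵀ) *ᵥ (Aᵀ *ᵥ a)) ⬝ᵥ (Aᵀ *ᵥ b) = a ⬝ᵥ b := by
  have hdet : IsUnit A.det := (Matrix.isUnit_iff_isUnit_det A).1 hA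
  have h1 : (A⁻¹ * (A⁻¹)ᵀ) * Aᵀ = A⁻¹ := by
    rw [Matrix.mul_assoc, ← Matrix.transpose_mul, Matrix.mul_nonsing_inv _ hdet,
      Matrix.transpose_one, Matrix.mul_one]
  rw [Matrix.mulVec_mulVec, h1, Matrix.dotProduct_mulVec, Matrix.vecMul_transpose,
    Matrix.mulVec_mulVec, Matrix.mul_nonsing_inv _ hdet, Matrix.one_mulVec]

lemma integral_image_eq_mapped {D : ℕ} {Ω : Set (Fin D → ℝ)} (hΩ : IsOpen Ω)
    {Φ : (Fin D → ℝ) → (Fin D → ℝ)} (hΦim : IsOpen (Φ '' Ω)) (hΦ : ContDiffOn ℝ 1 Φ Ω)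
    (hinj : Set.InjOn Φ Ω) (hinv : ∀ x ∈ Ω, IsUnit (jacMatrix Φ x))
    {u v w : (Fin D → ℝ) → ℝ} (hu : ContDiffOn ℝ 1 u (Φ '' Ω)) (hv : ContDiff ℝ 1 v)
    (hw : ∀ x ∈ Ω, w x = v (Φ x)) :
    ∫ y in Φ '' Ω, gradVec u y ⬝ᵥ gradVec v y =
      ∫ x in Ω, |(jacMatrix Φ x).det| *
          ((((jacMatrix Φ x)⁻¹ * ((jacMatrix Φ x)⁻¹)ᵀ).mulVec (gradVec (u ∘ Φ) x)) ⬝ᵥ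
            gradVec w x) := by
  have hd : ∀ x ∈ Ω, DifferentiableAt ℝ Φ x := fun x hx =>
    (hΦ.contDiffAt (hΩ.mem_nhds hx)).differentiableAt one_ne_zero
  rw [integral_image_eq_integral_abs_det_fderiv_smul volume hΩ.measurableSet
    (fun x hx => (hd x hx).hasFDerivAt.hasFDerivWithinAt) hinj]
  refine setIntegral_congr_fun hΩ.measurableSet fun x hx => ?_
  have hud : DifferentiableAt ℝ u (Φ x) :=
    (hu.contDiffAt (hΦim.mem_nhds ⟨x, hx, rfl⟩)).differentiableAt one_ne_zero
  have hgw : gradVec w x = gradVec (v ∘ Φ) x := by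
    have h : w =ᶠ[nhds x] v ∘ Φ := by
      filter_upwards [hΩ.mem_nhds hx] with z hz using hw z hz
    ext i
    rw [gradVec, gradVec, h.fderiv_eq]
  have hdet : (fderiv ℝ Φ x).det = (jacMatrix Φ x).det := by
    rw [jacMatrix_eq_toMatrix, LinearMap.det_toMatrix']
  simp only [smul_eq_mul]
  rw [hgw, gradVec_comp hud (hd x hx),
    gradVec_comp (hv.differentiable one_ne_zero _) (hd x hx), mapped_integrand_eq (hinv x hx),
    hdet]

/-- Let `Φ` be a C¹ diffeomorphism from the open set `Ω` onto its open image
(with C¹ inverse `Ψ` and invertible derivative everywhere on `Ω`), and let `u` be C¹ on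
`Φ(Ω)`. Then the weak formulation of the Laplace problem on `Φ(Ω)` holds against all
compactly supported C¹ test functions iff the mapped weak formulation with diffusion tensor
`K = |det DΦ| (DΦ)⁻¹(DΦ)⁻ᵀ` holds on `Ω`. -/
theorem stmt_1 {D : ℕ} (Ω : Set (Fin D → ℝ)) (hΩ : IsOpen Ω)
    (Φ Ψ : (Fin D → ℝ) → (Fin D → ℝ))
    (hΦim : IsOpen (Φ '' Ω)) (hΦ : ContDiffOn ℝ 1 Φ Ω)
    (hΨ : ContDiffOn ℝ 1 Ψ (Φ '' Ω))
    (hleft : ∀ x ∈ Ω, Ψ (Φ x) = x)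
    (hinv : ∀ x ∈ Ω, IsUnit (jacMatrix Φ x))
    (u : (Fin D → ℝ) → ℝ) (hu : ContDiffOn ℝ 1 u (Φ '' Ω)) :
    (∀ v : (Fin D → ℝ) → ℝ, ContDiff ℝ 1 v → HasCompactSupport v →
        tsupport v ⊆ Φ '' Ω →
        ∫ y in Φ '' Ω, gradVec u y ⬝ᵥ gradVec v y = 0) ↔
    (∀ w : (Fin D → ℝ) → ℝ, ContDiff ℝ 1 w → HasCompactSupport w →
        tsupport w ⊆ Ω →
        ∫ x in Ω, |(jacMatrix Φ x).det| *
          ((((jacMatrix Φ x)⁻¹ * ((jacMatrix Φ x)⁻¹)ᵀ).mulVec (gradVec (u ∘ Φ) x)) ⬝ᵥ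
            gradVec w x) = 0) := by
  have hinj : Set.InjOn Φ Ω := fun a ha b hb h => by rw [← hleft a ha, h, hleft b hb]
  have hmΦ : Set.MapsTo Φ Ω (Φ '' Ω) := Set.mapsTo_image Φ Ω
  have hmΨ : Set.MapsTo Ψ (Φ '' Ω) Ω := by
    rintro _ ⟨x, hx, rfl⟩
    rwa [hleft x hx]
  have hright : ∀ y ∈ Φ '' Ω, Φ (Ψ y) = y := by
    rintro _ ⟨x, hx, rfl⟩
    rw [hleft x hx]
  constructor
  · intro H w hw hwc hws
    obtain ⟨v, hv, hvc, hvs, hvw⟩ :=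
      exists_pullback_test hΦim hΨ hΦ.continuousOn hmΦ hright hw hwc hws
    rw [← integral_image_eq_mapped hΩ hΦim hΦ hinj hinv hu hv
      (fun x hx => by rw [hvw _ (hmΦ hx), hleft x hx])]
    exact H v hv hvc hvs
  · intro H v hv hvc hvs
    obtain ⟨w, hw, hwc, hws, hwv⟩ :=
      exists_pullback_test hΩ hΦ hΨ.continuousOn hmΨ hleft hv hvc hvs
    rw [integral_image_eq_mapped hΩ hΦim hΦ hinj hinv hu hv hwv]
    exact H w hw hwc hws
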